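/- arXiv:1706.07880 — 3 statements merged into one kernel-verified Lean document; each statement's English description precedes it below -/
import Mathlib

section
/- (Theorem 1: convergence of CDSGD with fixed step size, strongly convex case.) Let (Ω, ℱ, P) be a probability space with filtration (ℱ_k)_{k∈ℕ}. Let V : ℝ^N → ℝ be differentiable, Ĥ-strongly convex (Ĥ > 0) with unique minimizer x* and V* = V(x*), and with ∇V Lipschitz continuous with constant γ̂ ≥ Ĥ. Let x₁ ∈ ℝ^N, and let (X_k), (G_k) be sequences of random vectors with X₁ = x₁ almost surely, X_k ℱ_k-measurable, G_k ℱ_{k+1}-measurable with E[‖G_k‖²] < ∞, and X_{k+1} = X_k − α·G_k. Assume for constants ζ₁ > 0, Q ≥ 0, Q_m ≥ ζ₁² that almost surely ⟨∇V(X_k), E[G_k | ℱ_k]⟩ ≥ ζ₁·‖∇V(X_k)‖² and E[‖G_k‖² | ℱ_k] ≤ Q + Q_m·‖∇V(X_k)‖² for all k, and that the step size satisfies 0 < α ≤ ζ₁/(γ̂·Q_m). Then for all k ≥ 1, E[V(X_k) − V*] ≤ (1 − α·Ĥ·ζ₁)^{k−1}·(V(x₁) − V*) + (α²·γ̂·Q/2)·Σ_{l=0}^{k−1}(1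 − α·Ĥ·ζ₁)^l. -/
open MeasureTheory Filter
open scoped RealInnerProductSpace BigOperators

/-!
One step of the iteration is controlled by the descent inequality
`V (x - α g) ≤ V x - α ⟪∇V x, g⟫ + γ α² ‖g‖² / 2`, which follows from the Lipschitz bound on `∇V`.
Taking expectations and pulling the `ℱ k`-measurable vector `∇V (X k)` out of the conditional
expectation, the two moment bounds and `α γ Qm ≤ ζ` give an expected decrease of at least
`α ζ / 2 * E‖∇V (X k)‖²`, up to the noise floor `α² γ Q / 2`. Strong convexity enters only through
the Polyak–Łojasiewicz inequality `2 H (V x - V*) ≤ ‖∇V x‖²`, which turns this decrease into a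
contraction of `E[V (X k) - V*]` by the factor `1 - α H ζ`.
-/

open scoped NNReal

section Smoothness

theorem norm_add_sub_sub_fderiv_le {E F : Type*} [NormedAddCommGroup E] [NormedSpace ℝ E]
    [NormedAddCommGroup F] [NormedSpace ℝ F] {f : E → F} {L : ℝ≥0} (hf : Differentiable ℝ f)
    (hL : LipschitzWith L (fderiv ℝ f)) (x d : E) :
    ‖f (x + d) - f x - fderiv ℝ f x d‖ ≤ L / 2 * ‖d‖ ^ 2 := by
  have hremainder (t : ℝ) : HasDerivAt (fun t : ℝ ↦ f (x + t • d) - f x - t • fderiv ℝ f x d)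
      (fderiv ℝ f (x + t • d) d - fderiv ℝ f x d) t := by
    have hline : HasDerivAt (fun t : ℝ ↦ x + t • d) d t := by
      simpa using ((hasDerivAt_id t).smul_const d).const_add x
    simpa [Pi.sub_def] using (((hf _).hasFDerivAt.comp_hasDerivAt t hline).sub_const (f x)).sub
      ((hasDerivAt_id t).smul_const (fderiv ℝ f x d))
  have hbound (t : ℝ) : HasDerivAt (fun t : ℝ ↦ L / 2 * ‖d‖ ^ 2 * t ^ 2) (L * ‖d‖ ^ 2 * t) t := by
    convert! (hasDerivAt_pow 2 t).const_mul (L / 2 * ‖d‖ ^ 2) using 1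
    norm_num
    ring
  have hderiv_le : ∀ t ∈ Set.Ico (0 : ℝ) 1,
      ‖fderiv ℝ f (x + t • d) d - fderiv ℝ f x d‖ ≤ L * ‖d‖ ^ 2 * t := fun t ht ↦
    calc ‖fderiv ℝ f (x + t • d) d - fderiv ℝ f x d‖
        ≤ ‖fderiv ℝ f (x + t • d) - fderiv ℝ f x‖ * ‖d‖ :=
          (fderiv ℝ f (x + t • d) - fderiv ℝ f x).le_opNorm d
      _ ≤ L * ‖x + t • d - x‖ * ‖d‖ := by gcongr; exact hL.norm_sub_le _ _
      _ = L * ‖d‖ ^ 2 * t := by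
          rw [add_sub_cancel_left, norm_smul, Real.norm_of_nonneg ht.1]; ring
  simpa using image_norm_le_of_norm_deriv_right_le_deriv_boundary
    (fun t _ ↦ (hremainder t).continuousAt.continuousWithinAt)
    (fun t _ ↦ (hremainder t).hasDerivWithinAt) (by simp) hbound hderiv_le
    (Set.right_mem_Icc.2 zero_le_one)

variable {E : Type*} [NormedAddCommGroup E] [InnerProductSpace ℝ E] [CompleteSpace E]
  {f : E → ℝ} {L : ℝ≥0}

theorem abs_add_sub_sub_inner_gradient_le (hf : Differentiable ℝ f)
    (hL : LipschitzWith L (gradient f)) (x d : E) :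
    |f (x + d) - f x - ⟪gradient f x, d⟫| ≤ L / 2 * ‖d‖ ^ 2 := by
  have hfderiv : LipschitzWith L (fderiv ℝ f) := by
    simpa [← toDual_comp_gradient] using (InnerProductSpace.toDual ℝ E).lipschitz.comp hL
  simpa [inner_gradient_left] using norm_add_sub_sub_fderiv_le hf hfderiv x d

/-- The Polyak–Łojasiewicz inequality with constant `μ`. It is stated relative to an arbitrary
reference value `c`, which is the minimum of `f` in applications. -/
def PolyakLojasiewicz (f : E → ℝ) (μ c : ℝ) : Prop :=
  ∀ x, 2 * μ * (f x - c) ≤ ‖gradient f x‖ ^ 2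

theorem PolyakLojasiewicz.of_strongConvex {μ : ℝ} (hμ : 0 ≤ μ) {y : E}
    (hf : ∀ x, f x + ⟪gradient f x, y - x⟫ + μ / 2 * ‖y - x‖ ^ 2 ≤ f y) :
    PolyakLojasiewicz f μ (f y) := by
  intro x
  have hsq : 0 ≤ ‖gradient f x‖ ^ 2 + 2 * (μ * ⟪gradient f x, y - x⟫) + (μ * ‖y - x‖) ^ 2 := by
    simpa [norm_add_sq_real, inner_smul_right, norm_smul, abs_of_nonneg hμ] using
      sq_nonneg ‖gradient f x + μ • (y - x)‖
  linarith [mul_le_mul_of_nonneg_left (hf x) hμ]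

end Smoothness

section Integrability

variable {Ω E F : Type*} {m0 : MeasurableSpace Ω} {P : Measure Ω}
  [NormedAddCommGroup E] [NormedAddCommGroup F]

theorem memLp_comp_of_lipschitzWith [IsFiniteMeasure P] {p : ENNReal} {K : ℝ≥0} {g : E → F}
    (hg : LipschitzWith K g) {x : Ω → E} (hx : MemLp x p P) : MemLp (fun ω ↦ g (x ω)) p P := by
  have hcentered : LipschitzWith K (fun y ↦ g y - g 0) := by
    simpa using hg.sub (LipschitzWith.const (g 0))
  simpa [Pi.add_def] using (hcentered.comp_memLp (sub_self _) hx).add (memLp_const (g 0))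

variable [InnerProductSpace ℝ E]

theorem integrable_inner_of_memLp_two {x y : Ω → E} (hx : MemLp x 2 P) (hy : MemLp y 2 P) :
    Integrable (fun ω ↦ ⟪x ω, y ω⟫) P :=
  (hx.norm.integrable_mul hy.norm).mono' (hx.1.inner hy.1)
    (ae_of_all _ fun ω ↦ norm_inner_le_norm (x ω) (y ω))

variable [CompleteSpace E]

theorem integrable_comp_of_lipschitzWith_gradient [IsFiniteMeasure P] {f : E → ℝ} {L : ℝ≥0}
    (hf : Differentiable ℝ f) (hL : LipschitzWith L (gradient f)) {x : Ω → E}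
    (hx : MemLp x 2 P) : Integrable (fun ω ↦ f (x ω)) P := by
  have htaylor : Integrable (fun ω ↦ f 0 + ⟪gradient f 0, x ω⟫) P :=
    (integrable_const _).add (integrable_inner_of_memLp_two (memLp_const _) hx)
  have hremainder : Integrable (fun ω ↦ f (x ω) - (f 0 + ⟪gradient f 0, x ω⟫)) P := by
    refine ((hx.integrable_norm_pow two_ne_zero).const_mul (L / 2 : ℝ)).mono'
      ((hf.continuous.comp_aestronglyMeasurable hx.1).sub htaylor.1) (ae_of_all _ fun ω ↦ ?_)
    simpa [sub_sub] using abs_add_sub_sub_inner_gradient_le hf hL 0 (x ω)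
  simpa [Pi.add_def] using hremainder.add htaylor

end Integrability

section ConditionalExpectation

variable {Ω E : Type*} {𝒢 m0 : MeasurableSpace Ω} {P : Measure Ω}
  [NormedAddCommGroup E] [InnerProductSpace ℝ E] [CompleteSpace E] {x g : Ω → E}

theorem condExp_inner_of_stronglyMeasurable_left [IsFiniteMeasure P]
    (hx𝒢 : StronglyMeasurable[𝒢] x) (hx : MemLp x 2 P) (hg : MemLp g 2 P) :
    P[fun ω ↦ ⟪x ω, g ω⟫ | 𝒢] =ᵐ[P] fun ω ↦ ⟪x ω, (P[g | 𝒢]) ω⟫ :=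
  condExp_bilin_of_stronglyMeasurable_left (innerSL ℝ) hx𝒢 (integrable_inner_of_memLp_two hx hg)
    (hg.integrable one_le_two)

theorem mul_integral_norm_sq_le_integral_inner [IsFiniteMeasure P] (h𝒢 : 𝒢 ≤ m0)
    (hx𝒢 : StronglyMeasurable[𝒢] x) (hx : MemLp x 2 P) (hg : MemLp g 2 P) {ζ : ℝ}
    (hinner : ∀ᵐ ω ∂P, ζ * ‖x ω‖ ^ 2 ≤ ⟪x ω, (P[g | 𝒢]) ω⟫) :
    ζ * ∫ ω, ‖x ω‖ ^ 2 ∂P ≤ ∫ ω, ⟪x ω, g ω⟫ ∂P := by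
  have hpull := condExp_inner_of_stronglyMeasurable_left hx𝒢 hx hg
  calc ζ * ∫ ω, ‖x ω‖ ^ 2 ∂P = ∫ ω, ζ * ‖x ω‖ ^ 2 ∂P := (integral_const_mul _ _).symm
    _ ≤ ∫ ω, ⟪x ω, (P[g | 𝒢]) ω⟫ ∂P :=
        integral_mono_ae ((hx.integrable_norm_pow two_ne_zero).const_mul ζ)
          (integrable_condExp.congr hpull) hinner
    _ = ∫ ω, (P[fun ω ↦ ⟪x ω, g ω⟫ | 𝒢]) ω ∂P := (integral_congr_ae hpull).symm
    _ = ∫ ω, ⟪x ω, g ω⟫ ∂P := integral_condExp h𝒢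

theorem integral_le_add_mul_integral_of_condExp_le [IsProbabilityMeasure P] (h𝒢 : 𝒢 ≤ m0)
    {u v : Ω → ℝ} {a b : ℝ} (hv : Integrable v P)
    (hle : ∀ᵐ ω ∂P, (P[u | 𝒢]) ω ≤ a + b * v ω) :
    ∫ ω, u ω ∂P ≤ a + b * ∫ ω, v ω ∂P :=
  calc ∫ ω, u ω ∂P = ∫ ω, (P[u | 𝒢]) ω ∂P := (integral_condExp h𝒢).symm
    _ ≤ ∫ ω, (a + b * v ω) ∂P :=
        integral_mono_ae integrable_condExp ((integrable_const a).add (hv.const_mul b)) hle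
    _ = a + b * ∫ ω, v ω ∂P := by
        rw [integral_add (integrable_const a) (hv.const_mul b), integral_const_mul]
        simp

end ConditionalExpectation

section StochasticGradientStep

variable {Ω E : Type*} {m0 : MeasurableSpace Ω} {P : Measure Ω} [IsFiniteMeasure P]
  [NormedAddCommGroup E] [InnerProductSpace ℝ E] [CompleteSpace E]
  {f : E → ℝ} {L : ℝ≥0} {x g : Ω → E} {α ζ Q Qm : ℝ}

theorem integral_comp_sub_smul_le (hf : Differentiable ℝ f) (hL : LipschitzWith L (gradient f))
    (hx : MemLp x 2 P) (hg : MemLp g 2 P) (α : ℝ) :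
    ∫ ω, f (x ω - α • g ω) ∂P ≤
      ∫ ω, f (x ω) ∂P - α * ∫ ω, ⟪gradient f (x ω), g ω⟫ ∂P
        + L / 2 * α ^ 2 * ∫ ω, ‖g ω‖ ^ 2 ∂P := by
  have hfx := integrable_comp_of_lipschitzWith_gradient hf hL hx
  have hinner := (integrable_inner_of_memLp_two (memLp_comp_of_lipschitzWith hL hx) hg).const_mul α
  have hlinear : Integrable (fun ω ↦ f (x ω) - α * ⟪gradient f (x ω), g ω⟫) P := hfx.sub hinner
  have hsq := (hg.integrable_norm_pow two_ne_zero).const_mul (L / 2 * α ^ 2)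
  have hdescent (ω : Ω) : f (x ω - α • g ω) ≤
      f (x ω) - α * ⟪gradient f (x ω), g ω⟫ + L / 2 * α ^ 2 * ‖g ω‖ ^ 2 := by
    have htaylor := le_of_abs_le (abs_add_sub_sub_inner_gradient_le hf hL (x ω) (-(α • g ω)))
    rw [← sub_eq_add_neg, inner_neg_right, inner_smul_right, norm_neg, norm_smul, mul_pow,
      Real.norm_eq_abs, sq_abs] at htaylor
    linarith
  rw [← integral_const_mul, ← integral_const_mul, ← integral_sub hfx hinner,
    ← integral_add hlinear hsq]
  exact integral_mono (integrable_comp_of_lipschitzWith_gradient hf hL (hx.sub (hg.const_smul α)))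
    (hlinear.add hsq) hdescent

theorem integral_comp_sub_smul_le_of_moment_bounds (hf : Differentiable ℝ f)
    (hL : LipschitzWith L (gradient f)) (hx : MemLp x 2 P) (hg : MemLp g 2 P)
    (hα : 0 ≤ α) (hstep : α * (L * Qm) ≤ ζ)
    (hinner : ζ * ∫ ω, ‖gradient f (x ω)‖ ^ 2 ∂P ≤ ∫ ω, ⟪gradient f (x ω), g ω⟫ ∂P)
    (hsecond : ∫ ω, ‖g ω‖ ^ 2 ∂P ≤ Q + Qm * ∫ ω, ‖gradient f (x ω)‖ ^ 2 ∂P) :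
    ∫ ω, f (x ω - α • g ω) ∂P ≤
      ∫ ω, f (x ω) ∂P - α * ζ / 2 * ∫ ω, ‖gradient f (x ω)‖ ^ 2 ∂P + α ^ 2 * L * Q / 2 := by
  have hdescent := integral_comp_sub_smul_le hf hL hx hg α
  set S := ∫ ω, ‖gradient f (x ω)‖ ^ 2 ∂P
  have : 0 ≤ S := integral_nonneg fun ω ↦ sq_nonneg _
  calc ∫ ω, f (x ω - α • g ω) ∂P
      ≤ ∫ ω, f (x ω) ∂P - α * (ζ * S) + L / 2 * α ^ 2 * (Q + Qm * S) :=
        hdescent.trans (by gcongr)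
    _ = ∫ ω, f (x ω) ∂P - α * ζ * S + α / 2 * S * (α * (L * Qm)) + α ^ 2 * L * Q / 2 := by ring
    _ ≤ ∫ ω, f (x ω) ∂P - α * ζ * S + α / 2 * S * ζ + α ^ 2 * L * Q / 2 := by gcongr
    _ = ∫ ω, f (x ω) ∂P - α * ζ / 2 * S + α ^ 2 * L * Q / 2 := by ring

theorem PolyakLojasiewicz.integral_comp_sub_smul_sub_le {μ c : ℝ} (hPL : PolyakLojasiewicz f μ c)
    (hf : Differentiable ℝ f) (hL : LipschitzWith L (gradient f))
    (hx : MemLp x 2 P) (hg : MemLp g 2 P)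
    (hα : 0 ≤ α) (hζ : 0 ≤ ζ) (hstep : α * (L * Qm) ≤ ζ)
    (hinner : ζ * ∫ ω, ‖gradient f (x ω)‖ ^ 2 ∂P ≤ ∫ ω, ⟪gradient f (x ω), g ω⟫ ∂P)
    (hsecond : ∫ ω, ‖g ω‖ ^ 2 ∂P ≤ Q + Qm * ∫ ω, ‖gradient f (x ω)‖ ^ 2 ∂P) :
    ∫ ω, (f (x ω - α • g ω) - c) ∂P ≤
      (1 - α * μ * ζ) * ∫ ω, (f (x ω) - c) ∂P + α ^ 2 * L * Q / 2 := by
  have hdecrease :=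
    integral_comp_sub_smul_le_of_moment_bounds hf hL hx hg hα hstep hinner hsecond
  have hfx := integrable_comp_of_lipschitzWith_gradient hf hL hx
  have hfx' : Integrable (fun ω ↦ f (x ω - α • g ω)) P :=
    integrable_comp_of_lipschitzWith_gradient hf hL (hx.sub (hg.const_smul α))
  have hgap : 2 * μ * ∫ ω, (f (x ω) - c) ∂P ≤ ∫ ω, ‖gradient f (x ω)‖ ^ 2 ∂P := by
    rw [← integral_const_mul]
    exact integral_mono ((hfx.sub (integrable_const c)).const_mul _)
      ((memLp_comp_of_lipschitzWith hL hx).integrable_norm_pow two_ne_zero) fun ω ↦ hPL (x ω)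
  have hgap_scaled := mul_le_mul_of_nonneg_left hgap (show 0 ≤ α * ζ / 2 by positivity)
  rw [integral_sub hfx (integrable_const c)] at hgap_scaled ⊢
  rw [integral_sub hfx' (integrable_const c)]
  linarith

end StochasticGradientStep

theorem le_pow_mul_add_mul_geom_sum {u : ℕ → ℝ} {ρ b : ℝ} (hρ : 0 ≤ ρ)
    (hu : ∀ n, u (n + 1) ≤ ρ * u n + b) (n : ℕ) :
    u n ≤ ρ ^ n * u 0 + b * ∑ l ∈ Finset.range n, ρ ^ l := by
  induction n with
  | zero => simp
  | succ n ih =>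
    calc u (n + 1) ≤ ρ * (ρ ^ n * u 0 + b * ∑ l ∈ Finset.range n, ρ ^ l) + b :=
          (hu n).trans (by gcongr)
      _ = ρ ^ (n + 1) * u 0 + b * ∑ l ∈ Finset.range (n + 1), ρ ^ l := by
          rw [geom_sum_succ]; ring

theorem contraction_factor_nonneg {α μ L ζ Qm : ℝ} (hα : 0 ≤ α) (hL : 0 ≤ L) (hμL : μ ≤ L)
    (hζ : 0 < ζ) (hQm : ζ ^ 2 ≤ Qm) (hstep : α * (L * Qm) ≤ ζ) : 0 ≤ 1 - α * μ * ζ := by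
  have hLζ : α * L * ζ ≤ 1 := by
    refine le_of_mul_le_mul_right ?_ hζ
    calc α * L * ζ * ζ = α * (L * ζ ^ 2) := by ring
      _ ≤ α * (L * Qm) := by gcongr
      _ ≤ 1 * ζ := by rwa [one_mul]
  have hμζ : α * μ * ζ ≤ α * L * ζ := by gcongr
  linarith

theorem cdsgd_fixed_step_strongly_convex_general {E Ω : Type*} [NormedAddCommGroup E]
    [InnerProductSpace ℝ E] [CompleteSpace E] {m0 : MeasurableSpace Ω}
    {P : Measure Ω} [IsProbabilityMeasure P] {ℱ : ℕ → MeasurableSpace Ω} (hℱ : ∀ n, ℱ n ≤ m0)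
    {V : E → ℝ} {μ c : ℝ} {L : ℝ≥0} (hPL : PolyakLojasiewicz V μ c) (hμL : μ ≤ L)
    (hV : Differentiable ℝ V) (hL : LipschitzWith L (gradient V))
    {X G : ℕ → Ω → E} {α ζ Q Qm : ℝ} (hζ : 0 < ζ) (hQm : ζ ^ 2 ≤ Qm)
    (hα : 0 ≤ α) (hstep : α * (L * Qm) ≤ ζ)
    (hX0 : MemLp (X 0) 2 P) (hXℱ : ∀ n, StronglyMeasurable[ℱ n] (X n))
    (hG : ∀ n, MemLp (G n) 2 P)
    (hupdate : ∀ n, X (n + 1) =ᵐ[P] fun ω ↦ X n ω - α • G n ω)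
    (hinner : ∀ n, ∀ᵐ ω ∂P,
      ζ * ‖gradient V (X n ω)‖ ^ 2 ≤ ⟪gradient V (X n ω), (P[G n | ℱ n]) ω⟫)
    (hsecond : ∀ n, ∀ᵐ ω ∂P,
      (P[fun ω' ↦ ‖G n ω'‖ ^ 2 | ℱ n]) ω ≤ Q + Qm * ‖gradient V (X n ω)‖ ^ 2) (n : ℕ) :
    ∫ ω, (V (X n ω) - c) ∂P ≤
      (1 - α * μ * ζ) ^ n * ∫ ω, (V (X 0 ω) - c) ∂P
        + α ^ 2 * L * Q / 2 * ∑ l ∈ Finset.range n, (1 - α * μ * ζ) ^ l := by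
  have hX (n : ℕ) : MemLp (X n) 2 P := by
    induction n with
    | zero => exact hX0
    | succ n ih => exact (ih.sub ((hG n).const_smul α)).ae_eq (hupdate n).symm
  refine le_pow_mul_add_mul_geom_sum (u := fun n ↦ ∫ ω, (V (X n ω) - c) ∂P)
    (contraction_factor_nonneg hα L.coe_nonneg hμL hζ hQm hstep) (fun n ↦ ?_) n
  have hgrad := memLp_comp_of_lipschitzWith hL (hX n)
  calc ∫ ω, (V (X (n + 1) ω) - c) ∂P = ∫ ω, (V (X n ω - α • G n ω) - c) ∂P :=
        integral_congr_ae ((hupdate n).fun_comp fun y ↦ V y - c)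
    _ ≤ (1 - α * μ * ζ) * ∫ ω, (V (X n ω) - c) ∂P + α ^ 2 * L * Q / 2 :=
        hPL.integral_comp_sub_smul_sub_le hV hL (hX n) (hG n) hα hζ.le hstep
          (mul_integral_norm_sq_le_integral_inner (hℱ n)
            (hL.continuous.comp_stronglyMeasurable (hXℱ n)) hgrad (hG n) (hinner n))
          (integral_le_add_mul_integral_of_condExp_le (hℱ n)
            (hgrad.integrable_norm_pow two_ne_zero) (hsecond n))

/-- Theorem 1 (convergence of CDSGD with fixed step size, strongly convex case):
`E[V(X_k) − V*] ≤ (1 − α·Ĥ·ζ₁)^{k−1}·(V(x₁) − V*) + (α²·γ̂·Q/2)·Σ_{l=0}^{k−1}(1 − α·Ĥ·ζ₁)^l`. -/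
theorem cdsgd_fixed_step_strongly_convex {N : ℕ} {Ω : Type*} {m0 : MeasurableSpace Ω}
    (P : Measure Ω) [IsProbabilityMeasure P] (ℱ : Filtration ℕ m0)
    (V : EuclideanSpace ℝ (Fin N) → ℝ) (Hh γh : ℝ)
    (hHh : 0 < Hh) (hHγ : Hh ≤ γh)
    (hdiff : Differentiable ℝ V)
    (hsc : ∀ x y : EuclideanSpace ℝ (Fin N),
      V y ≥ V x + ⟪gradient V x, y - x⟫ + (Hh / 2) * ‖y - x‖ ^ 2)
    (hLip : LipschitzWith γh.toNNReal (gradient V))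
    (xstar : EuclideanSpace ℝ (Fin N)) (hmin : ∀ x, V xstar ≤ V x)
    (x₁ : EuclideanSpace ℝ (Fin N))
    (X G : ℕ → Ω → EuclideanSpace ℝ (Fin N))
    (α ζ₁ Q Qm : ℝ) (hζ₁ : 0 < ζ₁) (hQ : 0 ≤ Q) (hQm : ζ₁ ^ 2 ≤ Qm)
    (hα : 0 < α) (hαle : α ≤ ζ₁ / (γh * Qm))
    (hX1 : ∀ᵐ ω ∂P, X 1 ω = x₁)
    (hXmeas : ∀ k, StronglyMeasurable[ℱ k] (X k))
    (hGmeas : ∀ k, StronglyMeasurable[ℱ (k + 1)] (G k))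
    (hGint : ∀ k, Integrable (fun ω => ‖G k ω‖ ^ 2) P)
    (hupdate : ∀ k, 1 ≤ k → ∀ ω, X (k + 1) ω = X k ω - α • G k ω)
    (hinner : ∀ k, 1 ≤ k → ∀ᵐ ω ∂P,
      ζ₁ * ‖gradient V (X k ω)‖ ^ 2 ≤ ⟪gradient V (X k ω), (P[G k|ℱ k]) ω⟫)
    (hsecond : ∀ k, 1 ≤ k → ∀ᵐ ω ∂P,
      (P[(fun ω' => ‖G k ω'‖ ^ 2)|ℱ k]) ω ≤ Q + Qm * ‖gradient V (X k ω)‖ ^ 2) :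
    ∀ k, 1 ≤ k →
      (∫ ω, (V (X k ω) - V xstar) ∂P) ≤
        (1 - α * Hh * ζ₁) ^ (k - 1) * (V x₁ - V xstar)
          + α ^ 2 * γh * Q / 2 * ∑ l ∈ Finset.range k, (1 - α * Hh * ζ₁) ^ l := by
  lift γh to ℝ≥0 using hHh.le.trans hHγ
  rw [Real.toNNReal_coe] at hLip
  have hstep : α * (γh * Qm) ≤ ζ₁ :=
    (le_div_iff₀ (mul_pos (hHh.trans_le hHγ) ((pow_pos hζ₁ 2).trans_le hQm))).1 hαle
  have hρ := contraction_factor_nonneg hα.le γh.coe_nonneg hHγ hζ₁ hQm hstep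
  have hG (k : ℕ) : MemLp (G k) 2 P :=
    (memLp_two_iff_integrable_sq_norm ((hGmeas k).mono (ℱ.le _)).aestronglyMeasurable).2 (hGint k)
  have hinit : ∫ ω, (V (X 1 ω) - V xstar) ∂P = V x₁ - V xstar := by
    simpa using integral_congr_ae (EventuallyEq.fun_comp hX1 fun y ↦ V y - V xstar)
  intro k hk
  obtain ⟨n, rfl⟩ := Nat.exists_eq_add_of_le' hk
  refine (cdsgd_fixed_step_strongly_convex_general (X := fun n ↦ X (n + 1))
    (G := fun n ↦ G (n + 1)) (fun n ↦ ℱ.le (n + 1))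
    (.of_strongConvex hHh.le fun x ↦ hsc x xstar) hHγ hdiff hLip hζ₁ hQm hα.le hstep
    ((memLp_const x₁).ae_eq (EventuallyEq.symm hX1)) (fun n ↦ hXmeas (n + 1)) (fun n ↦ hG (n + 1))
    (fun n ↦ ae_of_all _ (hupdate (n + 1) n.succ_pos)) (fun n ↦ hinner (n + 1) n.succ_pos)
    (fun n ↦ hsecond (n + 1) n.succ_pos) n).trans ?_
  rw [hinit, Nat.add_sub_cancel]
  gcongr
  exact n.le_succ
end

section
/- (Theorem 2: convergence of CDSGD with fixed step size, nonconvex case.) Let (Ω, ℱ, P) be a probability space with filtration (ℱ_k)_{k∈ℕ}. Let V : ℝ^N → ℝ be differentiable with ∇V Lipschitz continuous with constant γ̂ > 0 and bounded below by V_inf ∈ ℝ. Let x₁ ∈ ℝ^N, and let (X_k), (G_k) be random vectors with X₁ = x₁ almost surely, X_k ℱ_k-measurable, G_k ℱ_{k+1}-measurable with E[‖G_k‖²] < ∞, and X_{k+1} = X_k − α·G_k. Assume for constants ζ₁ > 0, Q ≥ 0, Q_m ≥ ζ₁² that almost surely ⟨∇V(X_k), E[G_k | ℱ_k]⟩ ≥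 ζ₁·‖∇V(X_k)‖² and E[‖G_k‖² | ℱ_k] ≤ Q + Q_m·‖∇V(X_k)‖² for all k, and 0 < α ≤ ζ₁/(γ̂·Q_m). Then for every m ≥ 1, Σ_{k=1}^{m} E[‖∇V(X_k)‖²] ≤ (γ̂·m·α·Q)/ζ₁ + 2·(V(x₁) − V_inf)/(ζ₁·α). -/
open MeasureTheory Filter
open scoped RealInnerProductSpace BigOperators

/-!
By the descent lemma, a step `x ↦ x - α g` changes `V` by at most
`-α ⟪∇V x, g⟫ + γ α² ‖g‖² / 2`. Taking expectations and conditioning on the past, the first term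
gains at least `α ζ E‖∇V‖²` and the second costs at most `γ α² (Q + Q_m E‖∇V‖²) / 2`. Since
`α γ Q_m ≤ ζ`, at most half of the gain is lost, so `E[V]` drops by `α ζ E‖∇V‖² / 2` up to the
noise `γ α² Q / 2`. Telescoping, the total drop is at most `V x₁ - V_inf`.
-/

section Descent

open scoped NNReal Gradient

variable {E F : Type*} [NormedAddCommGroup E] [NormedAddCommGroup F] [NormedSpace ℝ F] {K : ℝ≥0}

lemma norm_sub_sub_fderiv_le_of_lipschitzWith [NormedSpace ℝ E] {f : E → F}
    (hf : Differentiable ℝ f) (hK : LipschitzWith K (fderiv ℝ f)) (x d : E) :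
    ‖f (x + d) - f x - fderiv ℝ f x d‖ ≤ K / 2 * ‖d‖ ^ 2 := by
  have hderiv (t : ℝ) : HasDerivAt (fun t : ℝ ↦ f (x + t • d) - f x - t • fderiv ℝ f x d)
      (fderiv ℝ f (x + t • d) d - fderiv ℝ f x d) t := by
    have hline : HasDerivAt (fun t : ℝ ↦ x + t • d) d t := by
      simpa using ((hasDerivAt_id t).smul_const d).const_add x
    have hlin : HasDerivAt (fun t : ℝ ↦ t • fderiv ℝ f x d) (fderiv ℝ f x d) t := by
      simpa using (hasDerivAt_id t).smul_const (fderiv ℝ f x d)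
    exact (((hf _).hasFDerivAt.comp_hasDerivAt t hline).sub_const _).sub hlin
  have hquad (t : ℝ) :
      HasDerivAt (fun t : ℝ ↦ K / 2 * ‖d‖ ^ 2 * t ^ 2) (K * ‖d‖ ^ 2 * t) t := by
    refine ((hasDerivAt_pow 2 t).const_mul (K / 2 * ‖d‖ ^ 2 : ℝ)).congr_deriv ?_
    push_cast
    ring
  have hbound (t : ℝ) (ht : t ∈ Set.Ico (0 : ℝ) 1) :
      ‖fderiv ℝ f (x + t • d) d - fderiv ℝ f x d‖ ≤ K * ‖d‖ ^ 2 * t := calc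
    _ ≤ ‖fderiv ℝ f (x + t • d) - fderiv ℝ f x‖ * ‖d‖ :=
      (fderiv ℝ f (x + t • d) - fderiv ℝ f x).le_opNorm d
    _ ≤ K * ‖t • d‖ * ‖d‖ := by
      gcongr
      simpa using hK.norm_sub_le (x + t • d) x
    _ = K * ‖d‖ ^ 2 * t := by
      rw [norm_smul, Real.norm_of_nonneg ht.1]
      ring
  simpa using image_norm_le_of_norm_deriv_right_le_deriv_boundary
    (fun t _ ↦ (hderiv t).continuousAt.continuousWithinAt)
    (fun t _ ↦ (hderiv t).hasDerivWithinAt) (by simp) hquad hbound (Set.right_mem_Icc.2 zero_le_one)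

variable [InnerProductSpace ℝ E] [CompleteSpace E] {V : E → ℝ}

lemma lipschitzWith_fderiv_of_gradient (hK : LipschitzWith K (∇ V)) :
    LipschitzWith K (fderiv ℝ V) := by
  simpa [Function.comp_def] using (InnerProductSpace.toDual ℝ E).lipschitz.comp hK

lemma le_add_inner_gradient_add_norm_sq (hV : Differentiable ℝ V) (hK : LipschitzWith K (∇ V))
    (x d : E) : V (x + d) ≤ V x + ⟪∇ V x, d⟫ + K / 2 * ‖d‖ ^ 2 := by
  have h := (le_abs_self _).trans
    (norm_sub_sub_fderiv_le_of_lipschitzWith hV (lipschitzWith_fderiv_of_gradient hK) x d)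
  rw [← inner_gradient_left] at h
  linarith

end Descent

section Integrability

open scoped NNReal ENNReal

variable {Ω E F : Type*} [NormedAddCommGroup E] [NormedAddCommGroup F] {K : ℝ≥0}
  {m0 : MeasurableSpace Ω} {μ : Measure Ω}

lemma memLp_comp_of_lipschitzWith_s8 [IsFiniteMeasure μ] {p : ℝ≥0∞} {f : E → F} {X : Ω → E}
    (hf : LipschitzWith K f) (hX : MemLp X p μ) : MemLp (fun ω ↦ f (X ω)) p μ := by
  have hsub : LipschitzWith K (fun x ↦ f x - f 0) := by
    simpa using hf.sub (LipschitzWith.const (f 0))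
  refine ((hsub.comp_memLp (sub_self _) hX).add (memLp_const (f 0))).ae_eq (ae_of_all _ fun ω ↦ ?_)
  simp

lemma integrable_comp_of_lipschitzWith_fderiv [NormedSpace ℝ E] [NormedSpace ℝ F]
    [IsFiniteMeasure μ] {f : E → F} {X : Ω → E} (hf : Differentiable ℝ f)
    (hK : LipschitzWith K (fderiv ℝ f)) (hX : MemLp X 2 μ) : Integrable (fun ω ↦ f (X ω)) μ := by
  have hlin : Integrable (fun ω ↦ fderiv ℝ f 0 (X ω)) μ :=
    (fderiv ℝ f 0).integrable_comp (hX.integrable one_le_two)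
  have hrem : Integrable (fun ω ↦ f (X ω) - f 0 - fderiv ℝ f 0 (X ω)) μ := by
    refine ((hX.integrable_norm_pow two_ne_zero).const_mul (K / 2 : ℝ)).mono'
      (((hf.continuous.comp_aestronglyMeasurable hX.1).sub aestronglyMeasurable_const).sub hlin.1)
      (ae_of_all _ fun ω ↦ ?_)
    simpa using norm_sub_sub_fderiv_le_of_lipschitzWith hf hK 0 (X ω)
  refine ((hrem.add hlin).add (integrable_const (f 0))).congr (ae_of_all _ fun ω ↦ ?_)
  simp

lemma integrable_inner_of_memLp_two_s8 [InnerProductSpace ℝ E] {Y G : Ω → E} (hY : MemLp Y 2 μ)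
    (hG : MemLp G 2 μ) : Integrable (fun ω ↦ ⟪Y ω, G ω⟫) μ :=
  memLp_one_iff_integrable.1 ((innerSL ℝ).memLp_of_bilin 1 hY hG)

lemma memLp_of_forall_succ_eq_sub_smul [NormedSpace ℝ E] {p : ℝ≥0∞} {X G : ℕ → Ω → E}
    {α : ℝ} (hX0 : MemLp (X 0) p μ) (hG : ∀ k, MemLp (G k) p μ)
    (hupdate : ∀ k ω, X (k + 1) ω = X k ω - α • G k ω) (k : ℕ) : MemLp (X k) p μ := by
  induction k with
  | zero => exact hX0
  | succ k ih =>
    rw [show X (k + 1) = X k - α • G k from funext (hupdate k)]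
    exact ih.sub ((hG k).const_smul α)

end Integrability

section ConditionalExpectation

variable {Ω E : Type*} {m m0 : MeasurableSpace Ω} {μ : Measure Ω}

lemma integral_le_integral_of_condExp_le (hm : m ≤ m0) [SigmaFinite (μ.trim hm)] {f g : Ω → ℝ}
    (hg : Integrable g μ) (h : μ[f | m] ≤ᵐ[μ] g) : ∫ ω, f ω ∂μ ≤ ∫ ω, g ω ∂μ :=
  (integral_condExp hm).symm.trans_le (integral_mono_ae integrable_condExp hg h)

lemma integral_le_integral_of_le_condExp (hm : m ≤ m0) [SigmaFinite (μ.trim hm)] {f g : Ω → ℝ}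
    (hf : Integrable f μ) (h : f ≤ᵐ[μ] μ[g | m]) : ∫ ω, f ω ∂μ ≤ ∫ ω, g ω ∂μ :=
  (integral_mono_ae hf integrable_condExp h).trans_eq (integral_condExp hm)

lemma mul_integral_norm_sq_le_integral_inner_s8 [NormedAddCommGroup E] [InnerProductSpace ℝ E]
    [CompleteSpace E] [IsFiniteMeasure μ] (hm : m ≤ m0) {Y G : Ω → E} {ζ : ℝ}
    (hYm : AEStronglyMeasurable[m] Y μ) (hY : MemLp Y 2 μ) (hG : MemLp G 2 μ)
    (h : ∀ᵐ ω ∂μ, ζ * ‖Y ω‖ ^ 2 ≤ ⟪Y ω, (μ[G | m]) ω⟫) :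
    ζ * ∫ ω, ‖Y ω‖ ^ 2 ∂μ ≤ ∫ ω, ⟪Y ω, G ω⟫ ∂μ := by
  have hpull : μ[fun ω ↦ ⟪Y ω, G ω⟫|m] =ᵐ[μ] fun ω ↦ ⟪Y ω, (μ[G | m]) ω⟫ :=
    condExp_bilin_of_aestronglyMeasurable_left (innerSL ℝ) hYm
      (integrable_inner_of_memLp_two_s8 hY hG) (hG.integrable one_le_two)
  rw [← integral_const_mul]
  refine integral_le_integral_of_le_condExp hm
    ((hY.integrable_norm_pow two_ne_zero).const_mul ζ) ?_
  filter_upwards [hpull, h] with ω hpull_ω hω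
  exact hω.trans_eq hpull_ω.symm

lemma integral_le_const_add_mul_integral [IsProbabilityMeasure μ] (hm : m ≤ m0) {f g : Ω → ℝ}
    {a b : ℝ} (hg : Integrable g μ) (h : ∀ᵐ ω ∂μ, (μ[f | m]) ω ≤ a + b * g ω) :
    ∫ ω, f ω ∂μ ≤ a + b * ∫ ω, g ω ∂μ := by
  have hbg : Integrable (fun ω ↦ b * g ω) μ := hg.const_mul b
  calc ∫ ω, f ω ∂μ ≤ ∫ ω, (a + b * g ω) ∂μ :=
        integral_le_integral_of_condExp_le hm ((integrable_const a).add hbg) h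
    _ = a + b * ∫ ω, g ω ∂μ := by
        rw [integral_add (integrable_const a) hbg, integral_const_mul]
        simp

end ConditionalExpectation

lemma mul_sum_range_le_of_forall_succ_le {a b : ℕ → ℝ} {c d : ℝ}
    (h : ∀ k, a (k + 1) ≤ a k - c * b k + d) (m : ℕ) :
    c * ∑ k ∈ Finset.range m, b k ≤ a 0 - a m + m * d := calc
  _ ≤ ∑ k ∈ Finset.range m, (a k - a (k + 1) + d) := by
    rw [Finset.mul_sum]
    exact Finset.sum_le_sum fun k _ ↦ by linarith [h k]
  _ = a 0 - a m + m * d := by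
    rw [Finset.sum_add_distrib, Finset.sum_range_sub']
    simp

section StochasticGradient

open scoped NNReal Gradient

variable {E Ω : Type*} [NormedAddCommGroup E] [InnerProductSpace ℝ E] [CompleteSpace E]
  {m0 : MeasurableSpace Ω} {P : Measure Ω} {V : E → ℝ} {γ : ℝ≥0} {α ζ Q Qm : ℝ}

lemma integral_comp_sub_smul_le_s8 [IsFiniteMeasure P] (hV : Differentiable ℝ V)
    (hγ : LipschitzWith γ (∇ V)) {X G : Ω → E} (hX : MemLp X 2 P) (hG : MemLp G 2 P) (α : ℝ) :
    ∫ ω, V (X ω - α • G ω) ∂P ≤ ∫ ω, V (X ω) ∂P - α * ∫ ω, ⟪∇ V (X ω), G ω⟫ ∂P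
      + γ / 2 * α ^ 2 * ∫ ω, ‖G ω‖ ^ 2 ∂P := by
  have hVint {Y : Ω → E} (hY : MemLp Y 2 P) : Integrable (fun ω ↦ V (Y ω)) P :=
    integrable_comp_of_lipschitzWith_fderiv hV (lipschitzWith_fderiv_of_gradient hγ) hY
  have hinner : Integrable (fun ω ↦ α * ⟪∇ V (X ω), G ω⟫) P :=
    (integrable_inner_of_memLp_two_s8 (memLp_comp_of_lipschitzWith_s8 hγ hX) hG).const_mul α
  have hfirst : Integrable (fun ω ↦ V (X ω) - α * ⟪∇ V (X ω), G ω⟫) P := (hVint hX).sub hinner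
  have hsecond : Integrable (fun ω ↦ γ / 2 * α ^ 2 * ‖G ω‖ ^ 2) P :=
    (hG.integrable_norm_pow two_ne_zero).const_mul _
  rw [← integral_const_mul, ← integral_const_mul, ← integral_sub (hVint hX) hinner,
    ← integral_add hfirst hsecond]
  refine integral_mono (hVint (hX.sub (hG.const_smul α))) (hfirst.add hsecond) fun ω ↦ ?_
  calc V (X ω - α • G ω)
      ≤ V (X ω) + ⟪∇ V (X ω), -(α • G ω)⟫ + γ / 2 * ‖-(α • G ω)‖ ^ 2 := by
        simpa only [sub_eq_add_neg] using
          le_add_inner_gradient_add_norm_sq hV hγ (X ω) (-(α • G ω))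
    _ = V (X ω) - α * ⟪∇ V (X ω), G ω⟫ + γ / 2 * α ^ 2 * ‖G ω‖ ^ 2 := by
        rw [inner_neg_right, real_inner_smul_right, norm_neg, norm_smul, mul_pow, Real.norm_eq_abs,
          sq_abs]
        ring

variable [IsProbabilityMeasure P]

lemma integral_comp_sub_smul_le_of_condExp {m : MeasurableSpace Ω} (hm : m ≤ m0)
    (hV : Differentiable ℝ V) (hγ : LipschitzWith γ (∇ V)) (hα : 0 ≤ α) (hαζ : α * γ * Qm ≤ ζ)
    {X G : Ω → E} (hXm : AEStronglyMeasurable[m] X P) (hX : MemLp X 2 P) (hG : MemLp G 2 P)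
    (hinner : ∀ᵐ ω ∂P, ζ * ‖∇ V (X ω)‖ ^ 2 ≤ ⟪∇ V (X ω), (P[G | m]) ω⟫)
    (hsecond : ∀ᵐ ω ∂P, (P[fun ω ↦ ‖G ω‖ ^ 2 | m]) ω ≤ Q + Qm * ‖∇ V (X ω)‖ ^ 2) :
    ∫ ω, V (X ω - α • G ω) ∂P ≤ ∫ ω, V (X ω) ∂P - α * ζ / 2 * ∫ ω, ‖∇ V (X ω)‖ ^ 2 ∂P
      + γ * α ^ 2 * Q / 2 := by
  have hgrad : MemLp (fun ω ↦ ∇ V (X ω)) 2 P := memLp_comp_of_lipschitzWith_s8 hγ hX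
  set S := ∫ ω, ‖∇ V (X ω)‖ ^ 2 ∂P
  have hS : 0 ≤ S := integral_nonneg fun ω ↦ by positivity
  have hgain : ζ * S ≤ ∫ ω, ⟪∇ V (X ω), G ω⟫ ∂P := mul_integral_norm_sq_le_integral_inner_s8 hm
    (hγ.continuous.comp_aestronglyMeasurable hXm) hgrad hG hinner
  have hnoise : ∫ ω, ‖G ω‖ ^ 2 ∂P ≤ Q + Qm * S :=
    integral_le_const_add_mul_integral hm (hgrad.integrable_norm_pow two_ne_zero) hsecond
  have hloss : α / 2 * S * (α * γ * Qm) ≤ α / 2 * S * ζ :=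
    mul_le_mul_of_nonneg_left hαζ (mul_nonneg (by positivity) hS)
  calc ∫ ω, V (X ω - α • G ω) ∂P
      ≤ ∫ ω, V (X ω) ∂P - α * ∫ ω, ⟪∇ V (X ω), G ω⟫ ∂P + γ / 2 * α ^ 2 * ∫ ω, ‖G ω‖ ^ 2 ∂P :=
        integral_comp_sub_smul_le_s8 hV hγ hX hG α
    _ ≤ ∫ ω, V (X ω) ∂P - α * (ζ * S) + γ / 2 * α ^ 2 * (Q + Qm * S) := by gcongr
    _ = ∫ ω, V (X ω) ∂P - α * ζ * S + α / 2 * S * (α * γ * Qm) + γ * α ^ 2 * Q / 2 := by ring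
    _ ≤ ∫ ω, V (X ω) ∂P - α * ζ * S + α / 2 * S * ζ + γ * α ^ 2 * Q / 2 := by linarith
    _ = ∫ ω, V (X ω) ∂P - α * ζ / 2 * S + γ * α ^ 2 * Q / 2 := by ring

theorem cdsgd_fixed_step_nonconvex_general {ℱ : ℕ → MeasurableSpace Ω} (hℱ : ∀ k, ℱ k ≤ m0)
    (hV : Differentiable ℝ V) (hγ : LipschitzWith γ (∇ V)) {Vinf : ℝ} (hbdd : ∀ x, Vinf ≤ V x)
    (hζ : 0 < ζ) (hα : 0 < α) (hαζ : α * γ * Qm ≤ ζ) {X G : ℕ → Ω → E} (hX0 : MemLp (X 0) 2 P)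
    (hXmeas : ∀ k, AEStronglyMeasurable[ℱ k] (X k) P) (hG : ∀ k, MemLp (G k) 2 P)
    (hupdate : ∀ k ω, X (k + 1) ω = X k ω - α • G k ω)
    (hinner : ∀ k, ∀ᵐ ω ∂P, ζ * ‖∇ V (X k ω)‖ ^ 2 ≤ ⟪∇ V (X k ω), (P[G k | ℱ k]) ω⟫)
    (hsecond : ∀ k, ∀ᵐ ω ∂P,
      (P[fun ω ↦ ‖G k ω‖ ^ 2 | ℱ k]) ω ≤ Q + Qm * ‖∇ V (X k ω)‖ ^ 2) (m : ℕ) :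
    ∑ k ∈ Finset.range m, ∫ ω, ‖∇ V (X k ω)‖ ^ 2 ∂P ≤
      γ * m * α * Q / ζ + 2 * (∫ ω, V (X 0 ω) ∂P - Vinf) / (ζ * α) := by
  have hX := memLp_of_forall_succ_eq_sub_smul hX0 hG hupdate
  have hdecrease (k : ℕ) : ∫ ω, V (X (k + 1) ω) ∂P ≤ ∫ ω, V (X k ω) ∂P
      - α * ζ / 2 * ∫ ω, ‖∇ V (X k ω)‖ ^ 2 ∂P + γ * α ^ 2 * Q / 2 := by
    simpa only [hupdate] using integral_comp_sub_smul_le_of_condExp (hℱ k) hV hγ hα.le hαζ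
      (hXmeas k) (hX k) (hG k) (hinner k) (hsecond k)
  have hlower : Vinf ≤ ∫ ω, V (X m ω) ∂P := by
    have hint := integrable_comp_of_lipschitzWith_fderiv hV
      (lipschitzWith_fderiv_of_gradient hγ) (hX m)
    simpa using integral_mono (integrable_const Vinf) hint fun ω ↦ hbdd (X m ω)
  have hsum := mul_sum_range_le_of_forall_succ_le (a := fun k ↦ ∫ ω, V (X k ω) ∂P) hdecrease m
  calc ∑ k ∈ Finset.range m, ∫ ω, ‖∇ V (X k ω)‖ ^ 2 ∂P
      ≤ (∫ ω, V (X 0 ω) ∂P - Vinf + m * (γ * α ^ 2 * Q / 2)) / (α * ζ / 2) := by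
        rw [le_div_iff₀' (by positivity)]
        linarith
    _ = γ * m * α * Q / ζ + 2 * (∫ ω, V (X 0 ω) ∂P - Vinf) / (ζ * α) := by
        field_simp
        ring

end StochasticGradient

/-- Theorem 2 (convergence of CDSGD with fixed step size, nonconvex case):
`Σ_{k=1}^{m} E[‖∇V(X_k)‖²] ≤ (γ̂·m·α·Q)/ζ₁ + 2·(V(x₁) − V_inf)/(ζ₁·α)`. -/
theorem cdsgd_fixed_step_nonconvex {N : ℕ} {Ω : Type*} {m0 : MeasurableSpace Ω}
    (P : Measure Ω) [IsProbabilityMeasure P] (ℱ : Filtration ℕ m0)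
    (V : EuclideanSpace ℝ (Fin N) → ℝ) (γh : ℝ) (hγh : 0 < γh)
    (hdiff : Differentiable ℝ V)
    (hLip : LipschitzWith γh.toNNReal (gradient V))
    (Vinf : ℝ) (hbdd : ∀ x, Vinf ≤ V x)
    (x₁ : EuclideanSpace ℝ (Fin N))
    (X G : ℕ → Ω → EuclideanSpace ℝ (Fin N))
    (α ζ₁ Q Qm : ℝ) (hζ₁ : 0 < ζ₁) (hQ : 0 ≤ Q) (hQm : ζ₁ ^ 2 ≤ Qm)
    (hα : 0 < α) (hαle : α ≤ ζ₁ / (γh * Qm))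
    (hX1 : ∀ᵐ ω ∂P, X 1 ω = x₁)
    (hXmeas : ∀ k, StronglyMeasurable[ℱ k] (X k))
    (hGmeas : ∀ k, StronglyMeasurable[ℱ (k + 1)] (G k))
    (hGint : ∀ k, Integrable (fun ω => ‖G k ω‖ ^ 2) P)
    (hupdate : ∀ k, 1 ≤ k → ∀ ω, X (k + 1) ω = X k ω - α • G k ω)
    (hinner : ∀ k, 1 ≤ k → ∀ᵐ ω ∂P,
      ζ₁ * ‖gradient V (X k ω)‖ ^ 2 ≤ ⟪gradient V (X k ω), (P[G k|ℱ k]) ω⟫)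
    (hsecond : ∀ k, 1 ≤ k → ∀ᵐ ω ∂P,
      (P[(fun ω' => ‖G k ω'‖ ^ 2)|ℱ k]) ω ≤ Q + Qm * ‖gradient V (X k ω)‖ ^ 2) :
    ∀ m : ℕ, 1 ≤ m →
      (∑ k ∈ Finset.Icc 1 m, ∫ ω, ‖gradient V (X k ω)‖ ^ 2 ∂P) ≤
        γh * m * α * Q / ζ₁ + 2 * (V x₁ - Vinf) / (ζ₁ * α) := by
  intro m _
  have hQm_pos : 0 < Qm := (pow_pos hζ₁ 2).trans_le hQm
  have hαζ : α * γh.toNNReal * Qm ≤ ζ₁ := by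
    rwa [Real.coe_toNNReal _ hγh.le, mul_assoc, ← le_div_iff₀ (by positivity)]
  have hG (k : ℕ) : MemLp (G k) 2 P := (memLp_two_iff_integrable_sq_norm
    ((hGmeas k).mono (ℱ.le _)).aestronglyMeasurable).2 (hGint k)
  have hV1 : ∫ ω, V (X 1 ω) ∂P = V x₁ := by
    simpa using integral_congr_ae (hX1.mono fun ω hω ↦ congrArg V hω)
  have hmain := cdsgd_fixed_step_nonconvex_general (X := fun k ↦ X (k + 1))
    (G := fun k ↦ G (k + 1)) (fun k ↦ ℱ.le (k + 1)) hdiff hLip hbdd hζ₁ hα hαζ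
    ((memLp_congr_ae hX1).2 (memLp_const x₁))
    (fun k ↦ (hXmeas (k + 1)).aestronglyMeasurable) (fun k ↦ hG (k + 1))
    (fun k ↦ hupdate (k + 1) k.succ_pos) (fun k ↦ hinner (k + 1) k.succ_pos)
    (fun k ↦ hsecond (k + 1) k.succ_pos) m
  rw [zero_add, hV1, Real.coe_toNNReal _ hγh.le] at hmain
  simpa [← Finset.Ico_succ_right_eq_Icc, Finset.sum_Ico_eq_sum_range, add_comm] using hmain
end

section
/- (Proposition 1: consensus with fixed step size.) Let Π be a real symmetric N×N doubly stochastic matrix (Π1 = 1, nonnegative entries) with I ⪰ Π ≻ 0 and with eigenvalues 1 = λ₁(Π) > λ₂(Π) ≥ … ≥ λ_N(Π) > 0. Let (Ω, ℱ, P) be a probability space, let α > 0, L > 0, let the initial iterate x₁ ∈ ℝ^N be a constant multiple of the all-ones vector (identical initialization across agents), and let (X_k), (G_k) be random vectors in ℝ^N with X₁ = x₁ almost surely, E[‖G_k‖] ≤ L for all k, and X_{k+1} = Π·X_k − α·G_k. Let S_k := (1/N)·Σ_{j=1}^{N} X_k^j denote the average of the coordinates of X_k. Then for every agent j and every k ≥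 1, E[|X_k^j − S_k|] ≤ α·L/(1 − λ₂(Π)). -/
open MeasureTheory Filter
open scoped RealInnerProductSpace BigOperators

/-- The eigenvalues of a hermitian (real symmetric) matrix, sorted in increasing order;
`eigAsc A hA ⟨N-1,_⟩` is the largest eigenvalue `λ₁`, `eigAsc A hA ⟨N-2,_⟩` is the second
largest `λ₂`, and `eigAsc A hA ⟨0,_⟩` is the smallest eigenvalue `λ_N`. -/
noncomputable def eigAsc {N : ℕ} (A : Matrix (Fin N) (Fin N) ℝ) (hA : A.IsHermitian) :
    Fin N → ℝ :=
  hA.eigenvalues ∘ Tuple.sort hA.eigenvalues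

/-!
Every eigenvalue of `Π` but the top one has modulus at most `ρ < 1`, and the top eigenvector is the
consensus vector, so `Π` contracts the orthogonal complement of the consensus line by `ρ`. The
orthogonal projection `D` onto that complement commutes with `Π`, so that
`D X_{k+1} = Π (D X_k) - α D G_k` and hence `E‖D X_{k+1}‖ ≤ ρ E‖D X_k‖ + |α| L`. Iterating this
affine inequality bounds `E‖D X_k‖` by its initial value, damped geometrically, plus the fixed
point `|α| L / (1 - ρ)`.
-/

section Eigenbasis

open scoped InnerProductSpace

variable {𝕜 E ι : Type*} [RCLike 𝕜] [NormedAddCommGroup E] [InnerProductSpace 𝕜 E] [Fintype ι]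
  {T : E →ₗ[𝕜] E} {b : OrthonormalBasis ι 𝕜 E} {μ : ι → 𝕜}

theorem inner_map_of_eigenbasis (hb : ∀ i, T (b i) = μ i • b i) (i : ι) (x : E) :
    ⟪b i, T x⟫_𝕜 = μ i * ⟪b i, x⟫_𝕜 := by
  have hTx : T x = ∑ j, (μ j * ⟪b j, x⟫_𝕜) • b j := by
    conv_lhs => rw [← b.sum_repr' x]
    simp only [map_sum, map_smul, hb, smul_smul, mul_comm]
  rw [hTx, b.orthonormal.inner_right_fintype]

theorem norm_map_le_of_eigenbasis (hb : ∀ i, T (b i) = μ i • b i) {ρ : ℝ} (hρ : 0 ≤ ρ) {y : E}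
    (hμ : ∀ i, ⟪b i, y⟫_𝕜 ≠ 0 → ‖μ i‖ ≤ ρ) : ‖T y‖ ≤ ρ * ‖y‖ := by
  have hcoeff (i : ι) : ‖⟪b i, T y⟫_𝕜‖ ≤ ρ * ‖⟪b i, y⟫_𝕜‖ := by
    rw [inner_map_of_eigenbasis hb, norm_mul]
    by_cases hi : ⟪b i, y⟫_𝕜 = 0
    · simp [hi]
    · gcongr
      exact hμ i hi
  refine le_of_sq_le_sq ?_ (by positivity)
  calc ‖T y‖ ^ 2 = ∑ i, ‖⟪b i, T y⟫_𝕜‖ ^ 2 := (b.sum_sq_norm_inner_right _).symm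
    _ ≤ ∑ i, (ρ * ‖⟪b i, y⟫_𝕜‖) ^ 2 := by gcongr with i; exact hcoeff i
    _ = (ρ * ‖y‖) ^ 2 := by
      simp only [mul_pow, ← Finset.mul_sum, b.sum_sq_norm_inner_right]

theorem inner_eq_zero_of_map_eq_self (hb : ∀ i, T (b i) = μ i • b i) {u : E} (hu : T u = u) {i : ι}
    (hi : μ i ≠ 1) : ⟪b i, u⟫_𝕜 = 0 := by
  have h := inner_map_of_eigenbasis hb i u
  rw [hu] at h
  by_contra hne
  exact hi ((right_eq_mul₀ hne).mp h)

theorem inner_eq_zero_of_orthogonal_map_eq_self (hb : ∀ i, T (b i) = μ i • b i) {i₀ : ι}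
    (hμ : ∀ i ≠ i₀, μ i ≠ 1) {u y : E} (hu : T u = u) (hu0 : u ≠ 0) (huy : ⟪u, y⟫_𝕜 = 0) :
    ⟪b i₀, y⟫_𝕜 = 0 := by
  have hspan : u = ⟪b i₀, u⟫_𝕜 • b i₀ := by
    conv_lhs => rw [← b.sum_repr' u]
    refine Finset.sum_eq_single i₀ (fun i _ hi ↦ ?_) (by simp)
    rw [inner_eq_zero_of_map_eq_self hb hu (hμ i hi), zero_smul]
  have hcoeff : ⟪b i₀, u⟫_𝕜 ≠ 0 := fun h ↦ hu0 (by rw [hspan, h, zero_smul])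
  rw [hspan, inner_smul_left] at huy
  exact (mul_eq_zero.mp huy).resolve_left ((map_ne_zero _).mpr hcoeff)

theorem norm_map_le_of_orthogonal_map_eq_self (hb : ∀ i, T (b i) = μ i • b i) {i₀ : ι} {ρ : ℝ}
    (hρ0 : 0 ≤ ρ) (hρ1 : ρ < 1) (hμ : ∀ i ≠ i₀, ‖μ i‖ ≤ ρ) {u y : E} (hu : T u = u) (hu0 : u ≠ 0)
    (huy : ⟪u, y⟫_𝕜 = 0) : ‖T y‖ ≤ ρ * ‖y‖ := by
  have hne (i : ι) (hi : i ≠ i₀) : μ i ≠ 1 := by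
    intro h
    have := hμ i hi
    rw [h, norm_one] at this
    exact this.not_gt hρ1
  refine norm_map_le_of_eigenbasis hb hρ0 fun i hi ↦ hμ i ?_
  rintro rfl
  exact hi (inner_eq_zero_of_orthogonal_map_eq_self hb hne hu hu0 huy)

end Eigenbasis

theorem starProjection_map_of_isSymmetric {𝕜 E : Type*} [RCLike 𝕜] [NormedAddCommGroup E]
    [InnerProductSpace 𝕜 E] {T : E →ₗ[𝕜] E} (hT : T.IsSymmetric) {U : Submodule 𝕜 E}
    [U.HasOrthogonalProjection] (hU : ∀ x ∈ U, T x ∈ U) (x : E) :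
    U.starProjection (T x) = T (U.starProjection x) := by
  refine Submodule.eq_starProjection_of_mem_orthogonal (hU _ (U.starProjection_apply_mem x)) ?_
  rw [← map_sub, Submodule.mem_orthogonal]
  intro y hy
  rw [← hT]
  exact U.sub_starProjection_mem_orthogonal x _ (hU y hy)

section Disagreement

variable {ι : Type*}

variable (ι) in
/-- The consensus vector `(1, …, 1)`: the multiples of it are the states in which all agents
agree. -/
def consensusVector : EuclideanSpace ℝ ι :=
  WithLp.toLp 2 1

theorem consensusVector_ne_zero [Nonempty ι] : consensusVector ι ≠ 0 :=
  (WithLp.toLp_eq_zero 2).not.mpr one_ne_zero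

variable [Fintype ι]

variable (ι) in
/-- The disagreement of a vector of agent states, namely the state minus the average over the
agents. It is encoded as the orthogonal projection off the consensus line; see
`disagreement_apply` for the coordinates. -/
noncomputable def disagreement : EuclideanSpace ℝ ι →L[ℝ] EuclideanSpace ℝ ι :=
  (ℝ ∙ consensusVector ι)ᗮ.starProjection

theorem disagreement_apply (x : EuclideanSpace ℝ ι) (j : ι) :
    disagreement ι x j = x j - (1 / (Fintype.card ι : ℝ)) * ∑ i, x i := by
  simp [disagreement, Submodule.starProjection_orthogonal_val, Submodule.starProjection_singleton,
    consensusVector, PiLp.inner_apply, EuclideanSpace.real_norm_sq_eq, div_eq_inv_mul]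

theorem disagreement_eq_zero_of_forall_eq {x : EuclideanSpace ℝ ι} {c : ℝ} (hx : ∀ i, x i = c) :
    disagreement ι x = 0 := by
  have hspan : x = c • consensusVector ι := by ext i; simp [hx, consensusVector]
  rw [hspan, disagreement]
  exact Submodule.starProjection_orthogonal_apply_eq_zero
    (Submodule.smul_mem _ _ (Submodule.mem_span_singleton_self _))

theorem norm_disagreement_le (x : EuclideanSpace ℝ ι) : ‖disagreement ι x‖ ≤ ‖x‖ :=
  Submodule.norm_starProjection_apply_le _ x

theorem inner_consensusVector_disagreement (x : EuclideanSpace ℝ ι) :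
    ⟪consensusVector ι, disagreement ι x⟫ = 0 :=
  Submodule.mem_orthogonal_singleton_iff_inner_right.mp (Submodule.starProjection_apply_mem _ x)

theorem toEuclideanLin_consensusVector [DecidableEq ι] {A : Matrix ι ι ℝ}
    (hA : A.mulVec (fun _ ↦ 1) = fun _ ↦ 1) :
    Matrix.toEuclideanLin A (consensusVector ι) = consensusVector ι :=
  congrArg (WithLp.toLp 2) hA

theorem disagreement_toEuclideanLin [DecidableEq ι] {A : Matrix ι ι ℝ} (hA : A.IsHermitian)
    (hA1 : A.mulVec (fun _ ↦ 1) = fun _ ↦ 1) (x : EuclideanSpace ℝ ι) :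
    disagreement ι (Matrix.toEuclideanLin A x) = Matrix.toEuclideanLin A (disagreement ι x) := by
  have hsymm := Matrix.isSymmetric_toEuclideanLin_iff.mpr hA
  refine starProjection_map_of_isSymmetric hsymm (fun y hy ↦ ?_) x
  rw [Submodule.mem_orthogonal_singleton_iff_inner_right] at hy ⊢
  rw [← hsymm, toEuclideanLin_consensusVector hA1, hy]

end Disagreement

theorem toEuclideanLin_eigenvectorBasis {𝕜 ι : Type*} [RCLike 𝕜] [Fintype ι] [DecidableEq ι]
    {A : Matrix ι ι 𝕜} (hA : A.IsHermitian) (i : ι) :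
    Matrix.toEuclideanLin A (hA.eigenvectorBasis i) =
      hA.eigenvalues i • hA.eigenvectorBasis i :=
  congrArg (WithLp.toLp 2) (hA.mulVec_eigenvectorBasis i)

section SecondEigenvalue

variable {N : ℕ} {A : Matrix (Fin N) (Fin N) ℝ}

theorem eigAsc_monotone (hA : A.IsHermitian) : Monotone (eigAsc A hA) :=
  Tuple.monotone_sort _

/-- The second largest eigenvalue modulus `max λ₂ (-λ_N)` of a symmetric matrix: the largest
modulus of an eigenvalue once one copy of the top eigenvalue `λ₁` is discarded. For `N ≤ 1` no
eigenvalue is left and the value is `0`. -/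
noncomputable def secondEigenvalueModulus (hA : A.IsHermitian) : ℝ :=
  ⨆ i : {i : Fin N // i.val + 1 < N}, |eigAsc A hA i|

theorem secondEigenvalueModulus_nonneg (hA : A.IsHermitian) : 0 ≤ secondEigenvalueModulus hA :=
  Real.iSup_nonneg fun _ ↦ abs_nonneg _

theorem abs_eigAsc_le_secondEigenvalueModulus (hA : A.IsHermitian) {i : Fin N}
    (hi : i.val + 1 < N) : |eigAsc A hA i| ≤ secondEigenvalueModulus hA :=
  le_ciSup (f := fun i : {i : Fin N // i.val + 1 < N} ↦ |eigAsc A hA i|)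
    (Set.finite_range _).bddAbove ⟨i, hi⟩

theorem abs_eigenvalues_le_secondEigenvalueModulus (hA : A.IsHermitian) {top i : Fin N}
    (htop : top.val + 1 = N) (hi : i ≠ Tuple.sort hA.eigenvalues top) :
    |hA.eigenvalues i| ≤ secondEigenvalueModulus hA := by
  obtain ⟨t, rfl⟩ := (Tuple.sort hA.eigenvalues).surjective i
  have ht : t.val ≠ top.val := fun h ↦ hi (congrArg _ (Fin.ext h))
  exact abs_eigAsc_le_secondEigenvalueModulus hA (by grind)

theorem secondEigenvalueModulus_eq_of_posSemidef (hA : A.PosSemidef) {second : Fin N}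
    (hsecond : second.val + 2 = N) :
    secondEigenvalueModulus hA.isHermitian = eigAsc A hA.isHermitian second := by
  have hnonneg (i : Fin N) : 0 ≤ eigAsc A hA.isHermitian i := hA.eigenvalues_nonneg _
  apply le_antisymm
  · refine Real.iSup_le (fun i ↦ ?_) (hnonneg second)
    rw [abs_of_nonneg (hnonneg i)]
    exact eigAsc_monotone _ (Fin.le_def.mpr (by grind))
  · exact (le_abs_self _).trans (abs_eigAsc_le_secondEigenvalueModulus _ (by grind))

theorem norm_toEuclideanLin_disagreement_le (hA : A.IsHermitian)
    (hA1 : A.mulVec (fun _ ↦ 1) = fun _ ↦ 1) (hρ : secondEigenvalueModulus hA < 1)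
    (x : EuclideanSpace ℝ (Fin N)) :
    ‖Matrix.toEuclideanLin A (disagreement (Fin N) x)‖ ≤
      secondEigenvalueModulus hA * ‖disagreement (Fin N) x‖ := by
  obtain _ | n := N
  · simp [Subsingleton.elim (disagreement (Fin 0) x) 0]
  exact norm_map_le_of_orthogonal_map_eq_self (toEuclideanLin_eigenvectorBasis hA)
    (secondEigenvalueModulus_nonneg hA) hρ
    (fun _ hi ↦ abs_eigenvalues_le_secondEigenvalueModulus hA (top := Fin.last n) rfl hi)
    (toEuclideanLin_consensusVector hA1) consensusVector_ne_zero
    (inner_consensusVector_disagreement x)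

theorem norm_disagreement_update_le (hA : A.IsHermitian)
    (hA1 : A.mulVec (fun _ ↦ 1) = fun _ ↦ 1) (hρ : secondEigenvalueModulus hA < 1) (α : ℝ)
    (x g : EuclideanSpace ℝ (Fin N)) :
    ‖disagreement (Fin N) (Matrix.toEuclideanLin A x - α • g)‖ ≤
      secondEigenvalueModulus hA * ‖disagreement (Fin N) x‖ + |α| * ‖g‖ := by
  rw [map_sub, map_smul, disagreement_toEuclideanLin hA hA1]
  refine (norm_sub_le _ _).trans (add_le_add ?_ ?_)
  · exact norm_toEuclideanLin_disagreement_le hA hA1 hρ x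
  · rw [norm_smul, Real.norm_eq_abs]
    gcongr
    exact norm_disagreement_le g

end SecondEigenvalue

theorem le_pow_mul_add_div_of_le_mul_add {a : ℕ → ℝ} {ρ C : ℝ} (hρ0 : 0 ≤ ρ) (hρ1 : ρ < 1)
    (hC : 0 ≤ C) {m : ℕ} (ha : ∀ k ≥ m, a (k + 1) ≤ ρ * a k + C) {k : ℕ} (hk : m ≤ k) :
    a k ≤ ρ ^ (k - m) * a m + C / (1 - ρ) := by
  have hgap : 0 < 1 - ρ := sub_pos.mpr hρ1
  induction k, hk using Nat.le_induction with
  | base =>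
    have : 0 ≤ C / (1 - ρ) := by positivity
    simpa using this
  | succ k hk ih =>
    calc a (k + 1) ≤ ρ * a k + C := ha k hk
      _ ≤ ρ * (ρ ^ (k - m) * a m + C / (1 - ρ)) + C := by gcongr
      _ = ρ ^ (k + 1 - m) * a m + C / (1 - ρ) := by
        rw [Nat.succ_sub hk, pow_succ]
        field_simp
        ring

section Iterates

variable {Ω : Type*} {m0 : MeasurableSpace Ω} {P : Measure Ω}

theorem integrable_disagreement_iterate {ι : Type*} [Fintype ι] [DecidableEq ι]
    {A : Matrix ι ι ℝ} (hA : A.IsHermitian) (hA1 : A.mulVec (fun _ ↦ 1) = fun _ ↦ 1) {α : ℝ}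
    {X G : ℕ → Ω → EuclideanSpace ℝ ι} {m : ℕ}
    (hXm : Integrable (fun ω ↦ disagreement ι (X m ω)) P) (hG : ∀ k ≥ m, Integrable (G k) P)
    (hupdate : ∀ k ≥ m, ∀ᵐ ω ∂P, X (k + 1) ω = Matrix.toEuclideanLin A (X k ω) - α • G k ω)
    {k : ℕ} (hk : m ≤ k) : Integrable (fun ω ↦ disagreement ι (X k ω)) P := by
  induction k, hk using Nat.le_induction with
  | base => exact hXm
  | succ k hk ih =>
    have hlinear := (Matrix.toEuclideanLin A).toContinuousLinearMap.integrable_comp ih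
    have hnoise := ((disagreement ι).integrable_comp (hG k hk)).smul α
    refine (hlinear.sub hnoise).congr ?_
    filter_upwards [hupdate k hk] with ω hω
    simp [hω, disagreement_toEuclideanLin hA hA1]

theorem integral_norm_disagreement_le {N : ℕ} {A : Matrix (Fin N) (Fin N) ℝ}
    (hA : A.IsHermitian) (hA1 : A.mulVec (fun _ ↦ 1) = fun _ ↦ 1)
    (hρ : secondEigenvalueModulus hA < 1) {α L : ℝ}
    {X G : ℕ → Ω → EuclideanSpace ℝ (Fin N)} {m : ℕ}
    (hXm : Integrable (fun ω ↦ disagreement (Fin N) (X m ω)) P)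
    (hG : ∀ k ≥ m, Integrable (G k) P) (hGbound : ∀ k ≥ m, ∫ ω, ‖G k ω‖ ∂P ≤ L)
    (hupdate : ∀ k ≥ m, ∀ᵐ ω ∂P, X (k + 1) ω = Matrix.toEuclideanLin A (X k ω) - α • G k ω)
    {k : ℕ} (hk : m ≤ k) :
    ∫ ω, ‖disagreement (Fin N) (X k ω)‖ ∂P ≤
      secondEigenvalueModulus hA ^ (k - m) * ∫ ω, ‖disagreement (Fin N) (X m ω)‖ ∂P +
        |α| * L / (1 - secondEigenvalueModulus hA) := by
  have hL : 0 ≤ L := (integral_nonneg fun _ ↦ norm_nonneg _).trans (hGbound m le_rfl)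
  refine le_pow_mul_add_div_of_le_mul_add
    (a := fun k ↦ ∫ ω, ‖disagreement (Fin N) (X k ω)‖ ∂P)
    (secondEigenvalueModulus_nonneg hA) hρ (by positivity) (fun k hk ↦ ?_) hk
  set ρ := secondEigenvalueModulus hA
  have hint {l : ℕ} (hl : m ≤ l) : Integrable (fun ω ↦ ‖disagreement (Fin N) (X l ω)‖) P :=
    (integrable_disagreement_iterate hA hA1 hXm hG hupdate hl).norm
  have hcontract := (hint hk).const_mul ρ
  have hnoise := (hG k hk).norm.const_mul |α|
  calc ∫ ω, ‖disagreement (Fin N) (X (k + 1) ω)‖ ∂P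
      ≤ ∫ ω, (ρ * ‖disagreement (Fin N) (X k ω)‖ + |α| * ‖G k ω‖) ∂P := by
        refine integral_mono_ae (hint (Nat.le_succ_of_le hk)) (hcontract.add hnoise) ?_
        filter_upwards [hupdate k hk] with ω hω
        rw [hω]
        exact norm_disagreement_update_le hA hA1 hρ α (X k ω) (G k ω)
    _ = ρ * ∫ ω, ‖disagreement (Fin N) (X k ω)‖ ∂P + |α| * ∫ ω, ‖G k ω‖ ∂P := by
        rw [integral_add hcontract hnoise, integral_const_mul, integral_const_mul]
    _ ≤ ρ * ∫ ω, ‖disagreement (Fin N) (X k ω)‖ ∂P + |α| * L := by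
        gcongr
        exact hGbound k hk

end Iterates

theorem cdsgd_consensus_fixed_step_general {N : ℕ} {Ω : Type*}
    {m0 : MeasurableSpace Ω} (P : Measure Ω) (Pi : Matrix (Fin N) (Fin N) ℝ)
    (hsymm : Pi.IsHermitian) (hstoch : Pi.mulVec (fun _ ↦ 1) = fun _ ↦ 1)
    (hρ : secondEigenvalueModulus hsymm < 1) (α L : ℝ)
    (X G : ℕ → Ω → EuclideanSpace ℝ (Fin N))
    (hX1 : Integrable (fun ω ↦ disagreement (Fin N) (X 1 ω)) P)
    (hG : ∀ k ≥ 1, Integrable (G k) P) (hGbound : ∀ k ≥ 1, ∫ ω, ‖G k ω‖ ∂P ≤ L)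
    (hupdate : ∀ k ≥ 1, ∀ᵐ ω ∂P, X (k + 1) ω = Matrix.toEuclideanLin Pi (X k ω) - α • G k ω)
    (j : Fin N) (k : ℕ) (hk : 1 ≤ k) :
    ∫ ω, |X k ω j - (1 / (N : ℝ)) * ∑ i, X k ω i| ∂P ≤
      secondEigenvalueModulus hsymm ^ (k - 1) * ∫ ω, ‖disagreement (Fin N) (X 1 ω)‖ ∂P +
        |α| * L / (1 - secondEigenvalueModulus hsymm) := by
  have hint := (integrable_disagreement_iterate hsymm hstoch hX1 hG hupdate hk).norm
  refine le_trans (integral_mono_of_nonneg (ae_of_all _ fun _ ↦ abs_nonneg _) hint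
    (ae_of_all _ fun ω ↦ ?_))
    (integral_norm_disagreement_le hsymm hstoch hρ hX1 hG hGbound hupdate hk)
  simpa [disagreement_apply] using PiLp.norm_apply_le (disagreement (Fin N) (X k ω)) j

/-- Proposition 1 (consensus with fixed step size): along the CDSGD iterates
`X_{k+1} = Π·X_k − α·G_k` with `E[‖G_k‖] ≤ L` and identical initialization, each agent's
estimate stays within `α·L/(1 − λ₂(Π))` of the average, in expectation. -/
theorem cdsgd_consensus_fixed_step {N : ℕ} (hN : 2 ≤ N) {Ω : Type*}
    {m0 : MeasurableSpace Ω} (P : Measure Ω) [IsProbabilityMeasure P]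
    (Pi : Matrix (Fin N) (Fin N) ℝ) (hsymm : Pi.IsHermitian)
    (hnonneg : ∀ i j, 0 ≤ Pi i j)
    (hstoch : Pi.mulVec (fun _ => 1) = fun _ => 1)
    (hpsd : (1 - Pi).PosSemidef) (hpd : Pi.PosDef)
    (hlam1 : eigAsc Pi hsymm ⟨N - 1, by omega⟩ = 1)
    (hlam2 : eigAsc Pi hsymm ⟨N - 2, by omega⟩ < 1)
    (hlamN : 0 < eigAsc Pi hsymm ⟨0, by omega⟩)
    (α L : ℝ) (hα : 0 < α) (hL : 0 < L)
    (c : ℝ) (x₁ : EuclideanSpace ℝ (Fin N)) (hx₁ : ∀ j, x₁ j = c)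
    (X G : ℕ → Ω → EuclideanSpace ℝ (Fin N))
    (hX1 : ∀ᵐ ω ∂P, X 1 ω = x₁)
    (hGmeas : ∀ k, AEStronglyMeasurable (G k) P)
    (hGint : ∀ k, Integrable (fun ω => ‖G k ω‖) P)
    (hGbound : ∀ k, (∫ ω, ‖G k ω‖ ∂P) ≤ L)
    (hupdate : ∀ k, 1 ≤ k → ∀ ω,
      X (k + 1) ω = (Matrix.toEuclideanLin Pi) (X k ω) - α • G k ω) :
    ∀ (j : Fin N) (k : ℕ), 1 ≤ k →
      (∫ ω, |X k ω j - (1 / (N : ℝ)) * ∑ i, X k ω i| ∂P) ≤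
        α * L / (1 - eigAsc Pi hsymm ⟨N - 2, by omega⟩) := by
  intro j k hk
  have hρ := secondEigenvalueModulus_eq_of_posSemidef hpd.posSemidef
    (second := ⟨N - 2, by omega⟩) (Nat.sub_add_cancel hN)
  have hconsensus : (fun ω ↦ disagreement (Fin N) (X 1 ω)) =ᵐ[P] 0 := by
    filter_upwards [hX1] with ω hω
    rw [hω, disagreement_eq_zero_of_forall_eq hx₁]
    rfl
  have hinit : ∫ ω, ‖disagreement (Fin N) (X 1 ω)‖ ∂P = 0 :=
    integral_eq_zero_of_ae (hconsensus.mono fun ω hω ↦ by simp [hω])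
  have hG (k : ℕ) : Integrable (G k) P := (integrable_norm_iff (hGmeas k)).mp (hGint k)
  simpa [hρ, hinit, abs_of_pos hα] using
    cdsgd_consensus_fixed_step_general P Pi hsymm hstoch (hρ ▸ hlam2) α L X G
      ((integrable_zero _ _ _).congr hconsensus.symm) (fun k _ ↦ hG k) (fun k _ ↦ hGbound k)
      (fun k hk ↦ ae_of_all _ (hupdate k hk)) j k hk
end
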